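/- Let R be the quotient of ℂ⟨e1,e2,e3⟩ by the two-sided ideal generated by e1e2 − e2e1 − e2, e1e3 − e3e1, e2e3 + e3e2, and e3². Then h_0 = 1 and h_n = 2 for every n ≥ 1; equivalently, the Poincaré series Σ_{n≥0} h_n z^n equals (1+z)/(1−z). -/

import Mathlib

open CategoryTheory FreeAlgebra

/-- `Ext^m_R(ℂ,ℂ)` as a ℂ-module, where `ℂ` is an `R`-module via the augmentation `ε`. -/
noncomputable def extC (R : Type) [Ring R] [Algebra ℂ R] (ε : R →ₐ[ℂ] ℂ) (m : ℕ) :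
    ModuleCat ℂ :=
  letI : Module R ℂ := Module.compHom ℂ ε.toRingHom
  ((Ext ℂ (ModuleCat R) m).obj (Opposite.op (ModuleCat.of R ℂ))).obj (ModuleCat.of R ℂ)

/-- `h_m = dim_ℂ Ext^m_R(ℂ,ℂ)`. -/
noncomputable def extDim (R : Type) [Ring R] [Algebra ℂ R] (ε : R →ₐ[ℂ] ℂ) (m : ℕ) : ℕ :=
  Module.finrank ℂ (extC R ε m)

/-- Relations: `e1e2 - e2e1 = e2`, `e1e3 - e3e1 = 0`, `e2e3 + e3e2 = 0`, `e3² = 0`. -/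
inductive CRel : FreeAlgebra ℂ (Fin 3) → FreeAlgebra ℂ (Fin 3) → Prop
  | r12 : CRel (ι ℂ 0 * ι ℂ 1 - ι ℂ 1 * ι ℂ 0) (ι ℂ 1)
  | r13 : CRel (ι ℂ 0 * ι ℂ 2 - ι ℂ 2 * ι ℂ 0) 0
  | r23 : CRel (ι ℂ 1 * ι ℂ 2 + ι ℂ 2 * ι ℂ 1) 0
  | r33 : CRel (ι ℂ 2 * ι ℂ 2) 0

namespace Betti

open Polynomial

/-- The three generators. -/
noncomputable def gen (i : Fin 3) : RingQuot CRel := RingQuot.mkAlgHom ℂ CRel (ι ℂ i)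

theorem rel12 : gen 0 * gen 1 = gen 1 * gen 0 + gen 1 := by
  have := RingQuot.mkAlgHom_rel ℂ CRel.r12
  simp only [map_sub, map_mul] at this
  exact sub_eq_iff_eq_add'.mp this

theorem rel13 : gen 0 * gen 2 = gen 2 * gen 0 := by
  have := RingQuot.mkAlgHom_rel ℂ CRel.r13
  simp only [map_sub, map_mul, map_zero] at this
  exact sub_eq_zero.mp this

theorem rel23 : gen 1 * gen 2 = - (gen 2 * gen 1) := by
  have := RingQuot.mkAlgHom_rel ℂ CRel.r23
  simp only [map_add, map_mul, map_zero] at this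
  exact eq_neg_of_add_eq_zero_left this

theorem rel33 : gen 2 * gen 2 = 0 := by
  have := RingQuot.mkAlgHom_rel ℂ CRel.r33
  rw [map_mul, map_zero] at this
  exact this

/-- Polynomials in `Y` (inner) and `X` (outer). -/
abbrev K := Polynomial (Polynomial ℂ)

/-- `X ↦ X + 1`. -/
noncomputable def sh : K →ₐ[ℂ] K := (Polynomial.aeval (R := ℂ[X]) (X + 1 : K)).restrictScalars ℂ

/-- `Y ↦ -Y`. -/
noncomputable def ng : K →ₐ[ℂ] K := Polynomial.mapAlgHom (Polynomial.aeval (-X : ℂ[X]))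

/-- the inner variable. -/
noncomputable def Y : K := C X

@[simp] theorem sh_X : sh X = X + 1 := by simp [sh]
@[simp] theorem sh_C (g : ℂ[X]) : sh (C g) = C g := by simp [sh]
@[simp] theorem sh_Y : sh Y = Y := sh_C _
@[simp] theorem ng_X : ng X = X := by simp [ng]
@[simp] theorem ng_C (g : ℂ[X]) : ng (C g) = C (aeval (-X : ℂ[X]) g) := by simp [ng]
@[simp] theorem ng_Y : ng Y = - Y := by simp [Y]

theorem algHom_ext_K {f g : K →ₐ[ℂ] K} (hX : f X = g X) (hY : f Y = g Y) : f = g := by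
  refine AlgHom.ext fun F => ?_
  induction F using Polynomial.induction_on with
  | C g =>
    induction g using Polynomial.induction_on with
    | C z => exact (f.commutes z).trans (g.commutes z).symm
    | add p q hp hq => rw [C_add, map_add, map_add, hp, hq]
    | monomial n z h => 
      rw [pow_succ, ← mul_assoc, C_mul, map_mul f, map_mul g, h]
      exact congrArg _ hY
  | add p q hp hq => rw [map_add, map_add, hp, hq]
  | monomial n a h => rw [pow_succ, ← mul_assoc, map_mul f, map_mul g, h, hX]

theorem ng_ng (F : K) : ng (ng F) = F := by
  have : ng.comp ng = AlgHom.id ℂ K := algHom_ext_K (by simp) (by simp)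
  exact DFunLike.congr_fun this F

theorem sh_ng (F : K) : sh (ng F) = ng (sh F) := by
  have : sh.comp ng = ng.comp sh := algHom_ext_K (by simp) (by simp)
  exact DFunLike.congr_fun this F

theorem sh_inj {F : K} (h : sh F = 0) : F = 0 := by
  let sh' : K →ₐ[ℂ] K := (Polynomial.aeval (R := ℂ[X]) (X - 1 : K)).restrictScalars ℂ
  have hX : sh' X = X - 1 := by simp [sh']
  have hY : sh' Y = Y := by simp [sh', Y]
  have : sh'.comp sh = AlgHom.id ℂ K := algHom_ext_K (by simp [hX]) (by simp [hY])
  have h2 : sh' (sh F) = F := DFunLike.congr_fun this F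
  rw [← h2, h, map_zero]

/-- right mult by `a`. -/
noncomputable def opA : Module.End ℂ (K × K) :=
  (LinearMap.mulLeft ℂ X).prodMap (LinearMap.mulLeft ℂ X)
/-- right mult by `b`. -/
noncomputable def opB : Module.End ℂ (K × K) :=
  ((LinearMap.mulLeft ℂ Y).comp sh.toLinearMap).prodMap
    ((LinearMap.mulLeft ℂ Y).comp sh.toLinearMap)
/-- right mult by `c`. -/
noncomputable def opC : Module.End ℂ (K × K) :=
  (LinearMap.inr ℂ K K).comp (ng.toLinearMap.comp (LinearMap.fst ℂ K K))

@[simp] theorem opA_apply (v : K × K) : opA v = (X * v.1, X * v.2) := rfl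
@[simp] theorem opB_apply (v : K × K) : opB v = (Y * sh v.1, Y * sh v.2) := rfl
@[simp] theorem opC_apply (v : K × K) : opC v = (0, ng v.1) := rfl

/-- The right regular representation. -/
noncomputable def rho : RingQuot CRel →ₐ[ℂ] (Module.End ℂ (K × K))ᵐᵒᵖ :=
  RingQuot.liftAlgHom ℂ ⟨FreeAlgebra.lift ℂ
    (fun i => MulOpposite.op ((![opA, opB, opC] : Fin 3 → Module.End ℂ (K × K)) i)), by
    intro x y h
    induction h <;> apply MulOpposite.unop_injective <;>
      refine LinearMap.ext fun v => ?_ <;>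
      simp [sh_ng] <;> (try constructor) <;> ring⟩

theorem rho_gen (i : Fin 3) : rho (gen i) =
    MulOpposite.op ((![opA, opB, opC] : Fin 3 → Module.End ℂ (K × K)) i) := by
  simp [rho, gen]

/-- right action -/
noncomputable def act (v : K × K) (r : RingQuot CRel) : K × K := (rho r).unop v

theorem act_mul (v r s) : act v (r * s) = act (act v r) s := by simp [act]
theorem act_add (v r s) : act v (r + s) = act v r + act v s := by simp [act]
theorem add_act (v w r) : act (v + w) r = act v r + act w r := by simp [act]
@[simp] theorem act_one (v) : act v 1 = v := by simp [act]
@[simp] theorem act_zero (v) : act v 0 = 0 := by simp [act]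
theorem act_alg (v) (z : ℂ) : act v (algebraMap ℂ _ z) = z • v := by simp [act]
@[simp] theorem act_a (v) : act v (gen 0) = (X * v.1, X * v.2) := by simp [act, rho_gen]
@[simp] theorem act_b (v) : act v (gen 1) = (Y * sh v.1, Y * sh v.2) := by simp [act, rho_gen]
@[simp] theorem act_c (v) : act v (gen 2) = (0, ng v.1) := by simp [act, rho_gen]

/-- `b^j a^i`. -/
noncomputable def psi (F : K) : RingQuot CRel :=
  F.eval₂ ((Polynomial.aeval (gen 1) : ℂ[X] →ₐ[ℂ] RingQuot CRel) : ℂ[X] →+* RingQuot CRel) (gen 0)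

theorem psi_add (F G) : psi (F + G) = psi F + psi G := eval₂_add _ _
@[simp] theorem psi_zero : psi 0 = 0 := eval₂_zero _ _
@[simp] theorem psi_one : psi 1 = 1 := eval₂_one _ _
theorem psi_neg (F) : psi (-F) = - psi F := by
  rw [eq_neg_iff_add_eq_zero, ← psi_add]; simp
theorem psi_mul_X (F) : psi (F * X) = psi F * gen 0 := eval₂_mul_X _ _
theorem psi_C_mul (g : ℂ[X]) (F) : psi (C g * F) = aeval (gen 1) g * psi F := by
  induction F using Polynomial.induction_on' with
  | add p q hp hq => rw [mul_add, psi_add, hp, hq, psi_add, mul_add]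
  | monomial n h => simp [psi, C_mul_monomial, eval₂_monomial, mul_assoc]

theorem K_induction {p : K → Prop} (add : ∀ F G, p F → p G → p (F + G))
    (C0 : ∀ g, p (C g)) (hX : ∀ F, p F → p (F * X)) (F : K) : p F := by
  induction F using Polynomial.induction_on with
  | C a => exact C0 a
  | add p q hp hq => exact add _ _ hp hq
  | monomial n a h => rw [pow_succ, ← mul_assoc]; exact hX _ h

theorem psi_C (g : ℂ[X]) : psi (C g) = aeval (gen 1) g := eval₂_C _ _

theorem psi_b (F : K) : psi F * gen 1 = psi (Y * sh F) := by
  induction F using K_induction with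
  | add F G hF hG => rw [psi_add, add_mul, hF, hG, map_add, mul_add, psi_add]
  | C0 g =>
    rw [sh_C, Y, ← C_mul, psi_C, psi_C, mul_comm X g]; simp
  | hX F h =>
    rw [psi_mul_X, mul_assoc, rel12, mul_add, ← mul_assoc, h, map_mul, sh_X, mul_add, mul_add,
      psi_add, ← mul_assoc, psi_mul_X, mul_one]

theorem psi_c (F : K) : psi F * gen 2 = gen 2 * psi (ng F) := by
  induction F using K_induction with
  | add F G hF hG => rw [psi_add, add_mul, hF, hG, map_add, psi_add, mul_add]
  | C0 g =>
    rw [ng_C, psi_C, psi_C]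
    induction g using Polynomial.induction_on with
    | C a => simp [Algebra.commutes]
    | add p q hp hq => simp [add_mul, mul_add, hp, hq]
    | monomial n a h =>
      rw [pow_succ, ← mul_assoc]
      generalize C a * X ^ n = g at h
      rw [map_mul, map_mul, map_mul, aeval_X, aeval_X, mul_assoc, rel23]
      refine (mul_neg (aeval (gen 1) g) (gen 2 * gen 1)).trans ?_
      rw [← mul_assoc, h, map_neg, aeval_X, mul_assoc]
      exact ((congrArg (gen 2 * ·) (mul_neg (aeval (gen 1) (aeval (-X : ℂ[X]) g)) (gen 1))).trans
        (mul_neg (gen 2) _)).symm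
  | hX F h =>
    rw [psi_mul_X, mul_assoc, rel13, ← mul_assoc, h, map_mul, ng_X, psi_mul_X, mul_assoc]

/-- PBW map -/
noncomputable def Psi (v : K × K) : RingQuot CRel := psi v.1 + gen 2 * psi v.2

theorem Psi_gen (v : K × K) (i : Fin 3) : Psi (act v (gen i)) = Psi v * gen i := by
  fin_cases i
  · simp [Psi, mul_comm X, psi_mul_X, add_mul, mul_assoc]
  · simp [Psi, add_mul, mul_assoc, psi_b]
  · simp only [Fin.reduceFinMk, act_c, Psi, add_mul, mul_assoc, psi_c]
    rw [← mul_assoc (gen 2) (gen 2), rel33]; simp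

theorem R_induction {p : RingQuot CRel → Prop} (h0 : ∀ z, p (algebraMap ℂ _ z))
    (hg : ∀ i, p (gen i)) (hm : ∀ r s, p r → p s → p (r * s)) (ha : ∀ r s, p r → p s → p (r + s))
    (r : RingQuot CRel) : p r := by
  obtain ⟨x, rfl⟩ := RingQuot.mkAlgHom_surjective ℂ CRel r
  induction x using FreeAlgebra.induction with
  | grade0 z => simpa using h0 z
  | grade1 i => exact hg i
  | mul a b ha hb => rw [map_mul]; exact hm _ _ ha hb
  | add a b ha' hb => rw [map_add]; exact ha _ _ ha' hb

theorem Psi_add (v w) : Psi (v + w) = Psi v + Psi w := by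
  simp [Psi, psi_add, mul_add]; abel

theorem psi_smul (z : ℂ) (F : K) : psi (z • F) = algebraMap ℂ _ z * psi F := by
  have : z • F = C (C z) * F := by
    ext; simp
  rw [this, psi_C_mul]; simp

theorem Psi_act (r : RingQuot CRel) : ∀ v : K × K, Psi (act v r) = Psi v * r := by
  induction r using R_induction with
  | h0 z =>
    intro v
    rw [act_alg, ← Algebra.commutes]
    simp only [Psi, Prod.smul_fst, Prod.smul_snd, psi_smul, mul_add, Algebra.left_comm]
  | hg i => exact fun v => Psi_gen v i
  | hm r s hr hs => intro v; rw [act_mul, hs, hr, mul_assoc]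
  | ha r s hr hs => intro v; rw [act_add, Psi_add, hr, hs, mul_add]

theorem Psi_one_act (r) : Psi (act (1, 0) r) = r := by
  rw [Psi_act]; simp [Psi]

theorem act_Y (v : K × K) (hv : sh v.1 = v.1 ∧ sh v.2 = v.2) (g : ℂ[X]) :
    act v (aeval (gen 1) g) = (C g * v.1, C g * v.2) := by
  induction g using Polynomial.induction_on with
  | C a =>
    rw [aeval_C, act_alg]
    ext <;> simp 
  | add p q hp hq => rw [map_add, act_add, hp, hq]; simp [add_mul]
  | monomial n a h =>
    rw [pow_succ, ← mul_assoc, map_mul, act_mul, h, aeval_X, act_b]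
    simp only [map_mul, sh_C, hv, Y]
    ext1 <;> simp <;> ring

theorem act_psi (v : K × K) (hv : sh v.1 = v.1 ∧ sh v.2 = v.2) (F : K) :
    act v (psi F) = (F * v.1, F * v.2) := by
  induction F using K_induction with
  | add F G hF hG => rw [psi_add, act_add, hF, hG]; simp [add_mul]
  | C0 g => rw [psi_C, act_Y v hv]
  | hX F h => rw [psi_mul_X, act_mul, h, act_a]; ext1 <;> simp only <;> ring

theorem act_Psi (v : K × K) : act (1, 0) (Psi v) = v := by
  rw [Psi, act_add, act_mul, act_psi _ (by simp), act_psi _ (by simp)]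
  simp

theorem Psi_inj {v w : K × K} (h : Psi v = Psi w) : v = w := by
  rw [← act_Psi v, h, act_Psi]

theorem exists_Psi (r) : ∃ F G, r = psi F + psi G * gen 2 := by
  refine ⟨(act (1, 0) r).1, ng (act (1, 0) r).2, ?_⟩
  rw [psi_c, ng_ng]; exact (Psi_one_act r).symm

theorem exact_c (r : RingQuot CRel) (h : r * gen 2 = 0) : ∃ s, r = s * gen 2 := by
  obtain ⟨F, G, rfl⟩ := exists_Psi r
  refine ⟨psi G, ?_⟩
  rw [add_mul, mul_assoc, rel33, mul_zero, add_zero, psi_c] at h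
  have : Psi (0, ng F) = Psi 0 := by simpa [Psi] using h
  have := congrArg Prod.snd (Psi_inj this)
  have : F = 0 := by rw [← ng_ng F, show ng F = 0 from this, map_zero]
  simp [this]

theorem exact_b (r : RingQuot CRel) (h : r * gen 1 = 0) : r = 0 := by
  have h1 := congrArg (act (1, 0)) h
  rw [act_mul, act_b, act_zero, Prod.ext_iff] at h1
  have hY : Y ≠ 0 := C_ne_zero.2 X_ne_zero
  have h2 := sh_inj ((mul_eq_zero.1 h1.1).resolve_left hY)
  have h3 := sh_inj ((mul_eq_zero.1 h1.2).resolve_left hY)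
  have h4 : act (1, 0) r = 0 := Prod.ext h2 h3
  rw [← Psi_one_act r, h4]
  simp [Psi]

theorem exact_ab (p q r : RingQuot CRel) (h : p * gen 2 + q * gen 0 + r * gen 1 = 0) :
    ∃ s q' r', q = - (s * gen 1) + q' * gen 2 ∧ r = s * (gen 0 - 1) + r' * gen 2 := by
  obtain ⟨F, G, hq⟩ := exists_Psi q
  obtain ⟨F', G', hr⟩ := exists_Psi r
  have h1 : X * F + Y * sh F' = 0 := by
    have h2 := congrArg (fun r => (act (1, 0) r).1) h
    simp only [hq, hr, act_add, act_mul, act_a, act_b, act_c, act_zero,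
      act_psi (1, 0) (by simp)] at h2
    simpa using h2
  have h3 : F'.IsRoot 1 := by
    have h4 := congrArg (Polynomial.eval 0) h1
    have : eval 0 (sh F') = eval 1 F' := by
      clear * -
      induction F' using K_induction with
      | add F G hF hG => rw [map_add, eval_add, hF, hG, eval_add]
      | C0 g => simp
      | hX F h => simp [h]
    simpa [Y, this] using h4
  obtain ⟨S, rfl⟩ := dvd_iff_isRoot.mpr h3
  have h5 : F = - (Y * sh S) := by
    have : (X : K) * (F + Y * sh S) = 0 := by
      rw [← h1]; simp; ring
    rcases mul_eq_zero.mp this with h | h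
    · exact absurd h X_ne_zero
    · exact eq_neg_of_add_eq_zero_left h
  refine ⟨psi S, psi G, psi G', ?_, ?_⟩
  · rw [hq, h5, psi_neg, psi_b]
  · have e : psi S * (gen 0 - 1) = psi S * gen 0 + - psi S := by
      have := mul_sub (psi S) (gen 0) 1
      rw [mul_one] at this
      exact this.trans (sub_eq_add_neg _ _)
    rw [hr, mul_comm _ S, map_one, mul_sub S, sub_eq_add_neg, psi_add, psi_neg, psi_mul_X, mul_one,
      e]

theorem exact_eps (ε : RingQuot CRel →ₐ[ℂ] ℂ) (hε : ∀ i, ε (gen i) = 0) (r : RingQuot CRel) :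
    ∃ p q s, r = algebraMap ℂ _ (ε r) + (p * gen 2 + q * gen 0 + s * gen 1) := by
  induction r using R_induction with
  | h0 z => exact ⟨0, 0, 0, by simp⟩
  | hg i =>
    fin_cases i
    · exact ⟨0, 1, 0, by simp [hε]⟩
    · exact ⟨0, 0, 1, by simp [hε]⟩
    · exact ⟨1, 0, 0, by simp [hε]⟩
  | hm r s hr hs =>
    obtain ⟨p, q, t, hr⟩ := hr
    obtain ⟨p', q', t', hs⟩ := hs
    refine ⟨r * p' + algebraMap ℂ _ (ε s) * p, r * q' + algebraMap ℂ _ (ε s) * q,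
      r * t' + algebraMap ℂ _ (ε s) * t, ?_⟩
    have : r * s = algebraMap ℂ _ (ε s) * r + r * (p' * gen 2 + q' * gen 0 + t' * gen 1) := by
      conv_lhs => rw [hs]
      rw [mul_add, Algebra.commutes]
    have h2 : algebraMap ℂ _ (ε s) * r = algebraMap ℂ (RingQuot CRel) (ε (r * s)) +
        algebraMap ℂ _ (ε s) * (p * gen 2 + q * gen 0 + t * gen 1) := by
      conv_lhs => rw [hr]
      rw [map_mul, map_mul, mul_add, Algebra.commutes]
    rw [h2] at this
    refine this.trans ?_
    noncomm_ring
  | ha r s hr hs =>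
    obtain ⟨p, q, t, hr⟩ := hr
    obtain ⟨p', q', t', hs⟩ := hs
    refine ⟨p + p', q + q', t + t', ?_⟩
    conv_lhs => rw [hr, hs]
    rw [map_add, map_add]
    noncomm_ring

end Betti

namespace Betti

section Hom

variable {R : Type} [Ring R]

/-- A general constructor for projective resolutions of modules. -/
theorem resolution (X : ℕ → ModuleCat.{0} R) (d : ∀ n, X (n + 1) ⟶ X n)
    (sq : ∀ n, d (n + 1) ≫ d n = 0) (proj : ∀ n, Projective (X n))
    (ex : ∀ n (x : X (n + 1)), d n x = 0 → ∃ y, d (n + 1) y = x)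
    (Z : ModuleCat.{0} R) (π : X 0 ⟶ Z) (hπ : d 0 ≫ π = 0) (surj : Function.Surjective π)
    (ex0 : ∀ x : X 0, π x = 0 → ∃ y, d 0 y = x) :
    ∃ P : ProjectiveResolution Z, P.complex = ChainComplex.of X d sq := by
  have hπ' : (ChainComplex.of X d sq).d 1 0 ≫ π = 0 := by
    refine Eq.trans ?_ hπ
    exact congrArg (· ≫ π) (ChainComplex.of_d X d 0)
  refine ⟨{ complex := ChainComplex.of X d sq
            projective := proj
            π := (ChainComplex.toSingle₀Equiv _ _).symm ⟨π, hπ'⟩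
            quasiIso := ⟨fun n => ?_⟩ }, rfl⟩
  cases n with
  | zero =>
    rw [ChainComplex.quasiIsoAt₀_iff, ShortComplex.quasiIso_iff_of_zeros']
    · have key : (ShortComplex.mk (d 0) π hπ).Exact ∧ Epi π :=
        ⟨(ShortComplex.moduleCat_exact_iff _).2 ex0, (ModuleCat.epi_iff_surjective _).2 surj⟩
      refine (ShortComplex.exact_and_epi_g_iff_of_iso ?_).2 key
      refine ShortComplex.isoMk (Iso.refl _) (Iso.refl _) (Iso.refl _) ?_ ?_
      · refine (Category.id_comp _).trans (Eq.trans ?_ (Category.comp_id _).symm)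
        exact (ChainComplex.of_d X d 0).symm
      · refine (Category.id_comp _).trans (Eq.trans ?_ (Category.comp_id _).symm)
        exact (ChainComplex.toSingle₀Equiv_symm_apply_f_zero
          (C := ChainComplex.of X d sq) π hπ').symm
    all_goals rfl
  | succ n =>
    rw [quasiIsoAt_iff_exactAt']
    · rw [HomologicalComplex.exactAt_iff' _ (n + 1 + 1) (n + 1) n (by simp) (by simp)]
      rw [ShortComplex.moduleCat_exact_iff]
      intro x hx
      have hx' : (ChainComplex.of X d sq).d (n + 1) n x = 0 := hx
      obtain ⟨y, hy⟩ := ex n x (by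
        have e : (ChainComplex.of X d sq).d (n + 1) n = d n := ChainComplex.of_d X d n
        rw [e] at hx'; exact hx')
      refine ⟨y, ?_⟩
      have e : (ChainComplex.of X d sq).d (n + 2) (n + 1) = d (n + 1) :=
        ChainComplex.of_d X d (n + 1)
      change (ChainComplex.of X d sq).d (n + 2) (n + 1) y = x
      rw [e, hy]
    · apply ChainComplex.exactAt_succ_single_obj

theorem finrank_homology (S : ShortComplex (ModuleCat.{0} ℂ)) {W : Type} [AddCommGroup W]
    [Module ℂ W] (ψ : S.X₂ →ₗ[ℂ] W) (hs : ∀ w, ∃ x, S.g x = 0 ∧ ψ x = w)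
    (hk : ∀ x, S.g x = 0 → (ψ x = 0 ↔ ∃ y, S.f y = x)) :
    Module.finrank ℂ S.homology = Module.finrank ℂ W := by
  rw [S.moduleCatHomologyIso.toLinearEquiv.finrank_eq]
  let ψ' : LinearMap.ker S.g.hom →ₗ[ℂ] W := ψ.comp (LinearMap.ker S.g.hom).subtype
  have h1 : LinearMap.range S.moduleCatToCycles = LinearMap.ker ψ' := by
    ext ⟨x, hx⟩
    have := hk x hx
    constructor
    · rintro ⟨y, hy⟩
      exact this.2 ⟨y, congrArg Subtype.val hy⟩
    · intro h
      obtain ⟨y, hy⟩ := this.1 h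
      exact ⟨y, Subtype.ext hy⟩
  have h2 : Function.Surjective ψ' := fun w => by
    obtain ⟨x, hx, h⟩ := hs w
    exact ⟨⟨x, hx⟩, h⟩
  exact ((Submodule.quotEquivOfEq _ _ h1).trans (ψ'.quotKerEquivOfSurjective h2)).finrank_eq

theorem ext_succ [Algebra ℂ R] (X : ℕ → ModuleCat.{0} R) (d : ∀ n, X (n + 1) ⟶ X n)
    (sq : ∀ n, d (n + 1) ≫ d n = 0) (Z : ModuleCat.{0} R)
    (n : ℕ) {W : Type} [AddCommGroup W] [Module ℂ W] (ψ : (X (n + 1) ⟶ Z) →ₗ[ℂ] W)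
    (hs : ∀ w, ∃ x, d (n + 1) ≫ x = 0 ∧ ψ x = w)
    (hk : ∀ x, d (n + 1) ≫ x = 0 → (ψ x = 0 ↔ ∃ y, d n ≫ y = x)) :
    Module.finrank ℂ (((ChainComplex.of X d sq).linearYonedaObj ℂ Z).homology (n + 1)) =
      Module.finrank ℂ W := by
  rw [(((ChainComplex.of X d sq).linearYonedaObj ℂ Z).homologyIsoSc' n (n + 1) (n + 2)
    (by simp) (by simp)).toLinearEquiv.finrank_eq]
  have e : ∀ m, (ChainComplex.of X d sq).d (m + 1) m = d m := fun m => ChainComplex.of_d X d m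
  have hg : ∀ x : X (n + 1) ⟶ Z, (((ChainComplex.of X d sq).linearYonedaObj ℂ Z).sc' n (n + 1)
      (n + 2)).g x = d (n + 1) ≫ x := fun x => congrArg (· ≫ x) (e (n + 1))
  have hf : ∀ x : X n ⟶ Z, (((ChainComplex.of X d sq).linearYonedaObj ℂ Z).sc' n (n + 1)
      (n + 2)).f x = d n ≫ x := fun x => congrArg (· ≫ x) (e n)
  refine finrank_homology _ ψ ?_ ?_
  · intro w
    obtain ⟨x, hx, h⟩ := hs w
    exact ⟨x, (hg x).trans hx, h⟩
  · intro x hx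
    refine (hk x ((hg x).symm.trans hx)).trans ?_
    exact exists_congr fun y => ⟨fun h => (hf y).trans h, fun h => (hf y).symm.trans h⟩

theorem ext_zero [Algebra ℂ R] (X : ℕ → ModuleCat.{0} R) (d : ∀ n, X (n + 1) ⟶ X n)
    (sq : ∀ n, d (n + 1) ≫ d n = 0) (Z : ModuleCat.{0} R)
    {W : Type} [AddCommGroup W] [Module ℂ W] (ψ : (X 0 ⟶ Z) →ₗ[ℂ] W)
    (hs : ∀ w, ∃ x, d 0 ≫ x = 0 ∧ ψ x = w)
    (hk : ∀ x, d 0 ≫ x = 0 → ψ x = 0 → x = 0) :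
    Module.finrank ℂ (((ChainComplex.of X d sq).linearYonedaObj ℂ Z).homology 0) =
      Module.finrank ℂ W := by
  rw [(((ChainComplex.of X d sq).linearYonedaObj ℂ Z).homologyIsoSc' 0 0 1
    (by simp) (by simp)).toLinearEquiv.finrank_eq]
  have e : ∀ m, (ChainComplex.of X d sq).d (m + 1) m = d m := fun m => ChainComplex.of_d X d m
  have hg : ∀ x : X 0 ⟶ Z, (((ChainComplex.of X d sq).linearYonedaObj ℂ Z).sc' 0 0 1).g x =
      d 0 ≫ x := fun x => congrArg (· ≫ x) (e 0)
  have hf : (((ChainComplex.of X d sq).linearYonedaObj ℂ Z).sc' 0 0 1).f = 0 :=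
    ((ChainComplex.of X d sq).linearYonedaObj ℂ Z).shape 0 0 (by simp)
  refine finrank_homology _ ψ ?_ ?_
  · intro w
    obtain ⟨x, hx, h⟩ := hs w
    exact ⟨x, (hg x).trans hx, h⟩
  · intro x hx
    constructor
    · intro h
      refine ⟨0, ?_⟩
      rw [map_zero]
      exact (hk x ((hg x).symm.trans hx) h).symm
    · rintro ⟨y, rfl⟩
      rw [hf]
      exact map_zero ψ

variable (a b c : R)

/-- The terms of the Koszul type resolution. -/
def KX : ℕ → ModuleCat.{0} R
  | 0 => ModuleCat.of R R
  | 1 => ModuleCat.of R (R × R × R)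
  | _ + 2 => ModuleCat.of R (R × R × R × R)

/-- `R³ → R`. -/
def d1 : R × R × R →ₗ[R] R where
  toFun x := x.1 * c + x.2.1 * a + x.2.2 * b
  map_add' x y := by simp only [Prod.fst_add, Prod.snd_add]; noncomm_ring
  map_smul' r x := by simp [mul_add, mul_assoc]

/-- `R⁴ → R³`. -/
def d2 : R × R × R × R →ₗ[R] R × R × R where
  toFun x := (x.1 * c + x.2.1 * a + x.2.2.1 * b, - (x.2.1 * c) - x.2.2.2 * b,
    x.2.2.1 * c + x.2.2.2 * (a - 1))
  map_add' x y := by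
    simp only [Prod.fst_add, Prod.snd_add]; ext <;> dsimp only [Prod.fst_add, Prod.snd_add] <;>
    noncomm_ring
  map_smul' r x := by ext <;> simp [mul_add, mul_sub, mul_assoc]

/-- `R⁴ → R⁴`. -/
def d3 : R × R × R × R →ₗ[R] R × R × R × R where
  toFun x := (x.1 * c + x.2.1 * a + x.2.2.1 * b, - (x.2.1 * c) - x.2.2.2 * b,
    x.2.2.1 * c + x.2.2.2 * (a - 1), - (x.2.2.2 * c))
  map_add' x y := by
    simp only [Prod.fst_add, Prod.snd_add]; ext <;> dsimp only [Prod.fst_add, Prod.snd_add] <;>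
    noncomm_ring
  map_smul' r x := by ext <;> simp [mul_add, mul_sub, mul_assoc]

/-- The differentials. -/
def Kd : ∀ n, KX (R := R) (n + 1) ⟶ KX n
  | 0 => ModuleCat.ofHom (d1 a b c)
  | 1 => ModuleCat.ofHom (d2 a b c)
  | _ + 2 => ModuleCat.ofHom (d3 a b c)

theorem KX_proj (n : ℕ) : Projective (KX (R := R) n) := by
  match n with
  | 0 => exact (IsProjective.iff_projective (R := R) R).1 inferInstance
  | 1 => exact (IsProjective.iff_projective (R := R) (R × R × R)).1 inferInstance
  | _ + 2 => exact (IsProjective.iff_projective (R := R) (R × R × R × R)).1 inferInstance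

/-- The facts on `a`, `b`, `c` needed for the resolution. -/
structure Good : Prop where
  r12 : a * b = b * a + b
  r13 : a * c = c * a
  r23 : b * c = - (c * b)
  r33 : c * c = 0
  ec : ∀ r, r * c = 0 → ∃ s, r = s * c
  eb : ∀ r, r * b = 0 → r = 0
  eab : ∀ p q r, p * c + q * a + r * b = 0 →
    ∃ s q' r', q = - (s * b) + q' * c ∧ r = s * (a - 1) + r' * c

variable {a b c}

theorem Good.d12 (h : Good a b c) (x) : d1 a b c (d2 a b c x) = 0 := by
  obtain ⟨p, q, r, s⟩ := x
  simp only [d1, d2, LinearMap.coe_mk, AddHom.coe_mk]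
  have e1 := congrArg (p * ·) h.r33
  have e2 := congrArg (q * ·) h.r13
  have e3 := congrArg (r * ·) h.r23
  have e4 := congrArg (s * ·) h.r12
  simp only [mul_add, mul_neg, mul_zero, ← mul_assoc] at e1 e2 e3 e4
  simp only [add_mul, sub_mul, neg_mul, mul_sub, mul_one, e1, e2, e3, e4]
  abel

theorem Good.d23 (h : Good a b c) (x) : d2 a b c (d3 a b c x) = 0 := by
  obtain ⟨p, q, r, s⟩ := x
  simp only [d3, d2, LinearMap.coe_mk, AddHom.coe_mk]
  have e1 := fun p => congrArg (p * ·) h.r33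
  have e2 := fun p => congrArg (p * ·) h.r13
  have e3 := fun p => congrArg (p * ·) h.r23
  have e4 := fun p => congrArg (p * ·) h.r12
  simp only [mul_add, mul_neg, mul_zero, ← mul_assoc] at e1 e2 e3 e4
  simp only [add_mul, sub_mul, neg_mul, mul_sub, mul_one, e1, e2, e3, e4]
  refine Prod.ext ?_ (Prod.ext ?_ ?_) <;> dsimp only [Prod.fst_zero, Prod.snd_zero] <;> abel

theorem Good.d33 (h : Good a b c) (x) : d3 a b c (d3 a b c x) = 0 := by
  have h2 := h.d23 x
  obtain ⟨p, q, r, s⟩ := x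
  have e1 : s * c * c = 0 := by rw [mul_assoc, h.r33, mul_zero]
  simp only [d3, d2, LinearMap.coe_mk, AddHom.coe_mk, Prod.ext_iff, Prod.fst_zero, Prod.snd_zero]
    at h2 ⊢
  refine ⟨h2.1, h2.2.1, h2.2.2, ?_⟩
  rw [neg_mul, e1, neg_zero, neg_zero]

theorem Good.sq (h : Good a b c) : ∀ n, Kd a b c (n + 1) ≫ Kd a b c n = 0
  | 0 => ModuleCat.hom_ext (LinearMap.ext h.d12)
  | 1 => ModuleCat.hom_ext (LinearMap.ext h.d23)
  | _ + 2 => ModuleCat.hom_ext (LinearMap.ext h.d33)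

theorem Good.ex1 (h : Good a b c) (x) (hx : d1 a b c x = 0) : ∃ y, d2 a b c y = x := by
  obtain ⟨p, q, r⟩ := x
  obtain ⟨s, q', r', rfl, rfl⟩ := h.eab p q r hx
  have h1 := h.d12 (0, -q', r', s)
  simp only [d1, d2, LinearMap.coe_mk, AddHom.coe_mk] at hx h1
  obtain ⟨p', hp'⟩ := h.ec (p - (-q' * a + r' * b)) (by
    rw [← sub_eq_zero.2 (hx.trans h1.symm)]; noncomm_ring)
  refine ⟨(p', -q', r', s), ?_⟩
  simp only [d2, LinearMap.coe_mk, AddHom.coe_mk]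
  refine Prod.ext ?_ (Prod.ext ?_ ?_) <;> dsimp only
  · rw [← hp']; noncomm_ring
  · noncomm_ring
  · noncomm_ring

/-- common step -/
theorem Good.ex2 (h : Good a b c) (x) (hx : d2 a b c x = 0) (hx' : x.2.2.2 * c = 0) :
    ∃ y, d3 a b c y = x := by
  obtain ⟨p, q, r, s⟩ := x
  obtain ⟨s', rfl⟩ := h.ec s hx'
  have h1 := h.d23 (0, 0, 0, -s')
  simp only [d3, d2, LinearMap.coe_mk, AddHom.coe_mk, Prod.ext_iff, Prod.fst_zero,
    Prod.snd_zero] at hx h1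
  obtain ⟨q', hq'⟩ := h.ec (q - s' * b) (by
    rw [← sub_eq_zero.2 (h1.2.1.trans hx.2.1.symm)]; noncomm_ring)
  obtain ⟨r', hr'⟩ := h.ec (r + s' * (a - 1)) (by
    rw [← sub_eq_zero.2 (hx.2.2.trans h1.2.2.symm)]; noncomm_ring)
  have h2 := (Prod.ext_iff.1 (h.d23 (0, -q', r', -s'))).1
  simp only [d3, d2, LinearMap.coe_mk, AddHom.coe_mk, Prod.fst_zero] at h2
  have eq : q = s' * b + q' * c := by rw [← hq']; abel
  have er : r = r' * c - s' * (a - 1) := by rw [← hr']; abel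
  obtain ⟨p', hp'⟩ := h.ec (p - (-q' * a + r' * b)) (by
    rw [← sub_eq_zero.2 (hx.1.trans h2.symm), eq, er]; noncomm_ring)
  refine ⟨(p', -q', r', -s'), ?_⟩
  simp only [d3, LinearMap.coe_mk, AddHom.coe_mk]
  refine Prod.ext ?_ (Prod.ext ?_ (Prod.ext ?_ ?_)) <;> dsimp only
  · rw [← hp']; noncomm_ring
  · rw [eq]; noncomm_ring
  · rw [er]; noncomm_ring
  · noncomm_ring

theorem Good.ex3 (h : Good a b c) (x) (hx : d3 a b c x = 0) : ∃ y, d3 a b c y = x := by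
  have e := hx
  simp only [d3, LinearMap.coe_mk, AddHom.coe_mk, Prod.ext_iff, Prod.fst_zero,
    Prod.snd_zero] at e
  exact h.ex2 x (Prod.ext e.1 (Prod.ext e.2.1 e.2.2.1)) (neg_eq_zero.1 e.2.2.2)

theorem Good.exact (h : Good a b c) : ∀ n (x : KX (R := R) (n + 1)), Kd a b c n x = 0 →
    ∃ y, Kd a b c (n + 1) y = x
  | 0 => h.ex1
  | 1 => fun x hx => by
    have hx' : d2 a b c x = 0 := hx
    obtain ⟨p, q, r, s⟩ := x
    simp only [d2, LinearMap.coe_mk, AddHom.coe_mk, Prod.ext_iff, Prod.fst_zero,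
      Prod.snd_zero] at hx'
    refine h.ex2 (p, q, r, s) hx (h.eb _ ?_)
    have e : s * b = - (q * c) := by
      have e := hx'.2.1
      rw [sub_eq_zero] at e
      exact e.symm
    have e2 : s * b * c = 0 := by rw [e, neg_mul, mul_assoc, h.r33, mul_zero, neg_zero]
    rw [mul_assoc, h.r23, mul_neg, neg_eq_zero, ← mul_assoc] at e2
    exact e2
  | _ + 2 => h.ex3

section aug

variable [Algebra ℂ R] (ε : R →ₐ[ℂ] ℂ)

/-- `ℂ` as a module. -/
abbrev tr : ModuleCat.{0} R :=
  letI : Module R ℂ := Module.compHom ℂ ε.toRingHom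
  ModuleCat.of R ℂ

theorem tr_smul_apply {M : ModuleCat.{0} R} (z : ℂ) (f : M ⟶ tr ε) (m : M) :
    ((z • f) m : ℂ) = z * (f m : ℂ) := by
  have : ((z • f) m : ℂ) = ε (algebraMap ℂ R z) * (f m : ℂ) := rfl
  rw [this, ε.commutes]; rfl

theorem tr_ext {M : ModuleCat.{0} R} {f g : M ⟶ tr ε} (h : ∀ m, (f m : ℂ) = g m) : f = g :=
  ConcreteCategory.hom_ext _ _ h

theorem tr_map_smul {M : ModuleCat.{0} R} (r : R) (f : M ⟶ tr ε) (m : M) :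
    (f (r • m) : ℂ) = ε r * (f m : ℂ) :=
  letI : Module R ℂ := Module.compHom ℂ ε.toRingHom
  map_smul (f.hom : M →ₗ[R] ℂ) r m

theorem tr_add {M : ModuleCat.{0} R} (f : M ⟶ tr ε) (m n : M) :
    (f (m + n) : ℂ) = (f m : ℂ) + (f n : ℂ) :=
  map_add f.hom m n

theorem tr_comb3 {M : ModuleCat.{0} R} (f : M ⟶ tr ε) (p q r : R) (x y z : M) :
    (f (p • x + (q • y + r • z)) : ℂ) = ε p * (f x : ℂ) + (ε q * (f y : ℂ) + ε r * (f z : ℂ)) := by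
  rw [tr_add, tr_add, tr_map_smul, tr_map_smul, tr_map_smul]

theorem tr_comb4 {M : ModuleCat.{0} R} (f : M ⟶ tr ε) (p q r s : R) (x y z w : M) :
    (f (p • x + (q • y + (r • z + s • w))) : ℂ) =
      ε p * (f x : ℂ) + (ε q * (f y : ℂ) + (ε r * (f z : ℂ) + ε s * (f w : ℂ))) := by
  rw [tr_add, tr_comb3, tr_map_smul]

/-- evaluation -/
def ev {M : ModuleCat.{0} R} (m : M) : (M ⟶ tr ε) →ₗ[ℂ] ℂ where
  toFun f := f m
  map_add' _ _ := rfl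
  map_smul' z f := tr_smul_apply ε z f m

/-- The augmentation -/
def aug : KX (R := R) 0 ⟶ tr ε :=
  letI : Module R ℂ := Module.compHom ℂ ε.toRingHom
  ModuleCat.ofHom (Y := ℂ) (LinearMap.toSpanSingleton R ℂ 1)

theorem aug_apply (r : R) : (aug ε r : ℂ) = ε r := mul_one (ε r)

/-- A morphism on `R³`. -/
def mor3 (u v w : ℂ) : KX (R := R) 1 ⟶ tr ε :=
  letI : Module R ℂ := Module.compHom ℂ ε.toRingHom
  ModuleCat.ofHom (Y := ℂ) ((LinearMap.toSpanSingleton R ℂ u).coprod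
    ((LinearMap.toSpanSingleton R ℂ v).coprod (LinearMap.toSpanSingleton R ℂ w)))

theorem mor3_apply (u v w : ℂ) (x : R × R × R) :
    (mor3 ε u v w x : ℂ) = ε x.1 * u + (ε x.2.1 * v + ε x.2.2 * w) := rfl

/-- A morphism on `R⁴`. -/
def mor4 (n : ℕ) (u v w t : ℂ) : KX (R := R) (n + 2) ⟶ tr ε :=
  letI : Module R ℂ := Module.compHom ℂ ε.toRingHom
  ModuleCat.ofHom (Y := ℂ) ((LinearMap.toSpanSingleton R ℂ u).coprod
    ((LinearMap.toSpanSingleton R ℂ v).coprod ((LinearMap.toSpanSingleton R ℂ w).coprod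
      (LinearMap.toSpanSingleton R ℂ t))))

theorem mor4_apply (n : ℕ) (u v w t : ℂ) (x : R × R × R × R) :
    (mor4 ε n u v w t x : ℂ) = ε x.1 * u + (ε x.2.1 * v + (ε x.2.2.1 * w + ε x.2.2.2 * t)) := rfl

theorem eq_aug (f : KX (R := R) 0 ⟶ tr ε) : ∃ z : ℂ, f = z • aug ε := by
  refine ⟨f (1 : R), tr_ext ε fun (r : R) => ?_⟩
  refine Eq.trans ?_ (tr_smul_apply ε _ (aug ε) r).symm
  rw [aug_apply]
  have := tr_map_smul ε r f (1 : R)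
  rw [mul_comm, ← this]
  exact congrArg f (mul_one r).symm

theorem eq_mor3 (f : KX (R := R) 1 ⟶ tr ε) : ∃ u v w : ℂ, f = mor3 ε u v w := by
  refine ⟨f ((1, 0, 0) : R × R × R), f ((0, 1, 0) : R × R × R), f ((0, 0, 1) : R × R × R),
    tr_ext ε fun (x : R × R × R) => ?_⟩
  refine Eq.trans ?_ (mor3_apply ε _ _ _ x).symm
  refine Eq.trans (congrArg f ?_) (tr_comb3 ε f _ _ _ _ _ _)
  change x = x.1 • ((1, 0, 0) : R × R × R) + (x.2.1 • ((0, 1, 0) : R × R × R) +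
    x.2.2 • ((0, 0, 1) : R × R × R))
  ext <;> simp

theorem eq_mor4 (n : ℕ) (f : KX (R := R) (n + 2) ⟶ tr ε) :
    ∃ u v w t : ℂ, f = mor4 ε n u v w t := by
  refine ⟨f ((1, 0, 0, 0) : R × R × R × R), f ((0, 1, 0, 0) : R × R × R × R),
    f ((0, 0, 1, 0) : R × R × R × R), f ((0, 0, 0, 1) : R × R × R × R),
    tr_ext ε fun (x : R × R × R × R) => ?_⟩
  refine Eq.trans ?_ (mor4_apply ε n _ _ _ _ x).symm
  refine Eq.trans (congrArg f ?_) (tr_comb4 ε f _ _ _ _ _ _ _ _)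
  change x = x.1 • ((1, 0, 0, 0) : R × R × R × R) + (x.2.1 • ((0, 1, 0, 0) : R × R × R × R) +
    (x.2.2.1 • ((0, 0, 1, 0) : R × R × R × R) + x.2.2.2 • ((0, 0, 0, 1) : R × R × R × R)))
  ext <;> simp

theorem d1_aug (ha : ε a = 0) (hb : ε b = 0) (hc : ε c = 0)
 : Kd a b c 0 ≫ aug ε = 0 := by
  refine tr_ext ε fun (x : R × R × R) => ?_
  change (aug ε (d1 a b c x) : ℂ) = 0
  rw [aug_apply]
  simp [d1, ha, hb, hc]

theorem d1_comp (ha : ε a = 0) (hb : ε b = 0) (hc : ε c = 0)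
    (f : KX (R := R) 0 ⟶ tr ε) : Kd a b c 0 ≫ f = 0 := by
  obtain ⟨z, rfl⟩ := eq_aug ε f
  rw [Linear.comp_smul, d1_aug ε ha hb hc, smul_zero]

theorem d2_comp (ha : ε a = 0) (hb : ε b = 0) (hc : ε c = 0)
    (u v w : ℂ) : Kd a b c 1 ≫ mor3 ε u v w = mor4 ε 0 0 0 0 (-w) := by
  refine tr_ext ε fun (x : R × R × R × R) => ?_
  change (mor3 ε u v w (d2 a b c x) : ℂ) = mor4 ε 0 0 0 0 (-w) x
  rw [mor3_apply, mor4_apply]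
  simp [d2, ha, hb, hc]

theorem d3_comp (ha : ε a = 0) (hb : ε b = 0) (hc : ε c = 0)
    (n : ℕ) (u v w t : ℂ) :
    Kd a b c (n + 2) ≫ mor4 ε n u v w t = mor4 ε (n + 1) 0 0 0 (-w) := by
  refine tr_ext ε fun (x : R × R × R × R) => ?_
  change (mor4 ε n u v w t (d3 a b c x) : ℂ) = mor4 ε (n + 1) 0 0 0 (-w) x
  rw [mor4_apply, mor4_apply]
  simp [d3, ha, hb, hc]

theorem exists_res (ha : ε a = 0) (hb : ε b = 0) (hc : ε c = 0)
    (h : Good a b c)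
    (he : ∀ r, ∃ p q s, r = algebraMap ℂ R (ε r) + (p * c + q * a + s * b)) :
    ∃ P : ProjectiveResolution (tr ε), P.complex = ChainComplex.of KX (Kd a b c) h.sq := by
  refine resolution KX (Kd a b c) h.sq KX_proj h.exact (tr ε) (aug ε) (d1_aug ε ha hb hc) ?_ ?_
  · intro (z : ℂ)
    refine ⟨algebraMap ℂ R z, ?_⟩
    exact (aug_apply ε _).trans (ε.commutes z)
  · intro (x : R) hx
    have hx' : ε x = 0 := (aug_apply ε x).symm.trans hx
    obtain ⟨p, q, s, e⟩ := he x
    rw [hx', map_zero, zero_add] at e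
    exact ⟨((p, q, s) : R × R × R), e.symm⟩

theorem extDim_eq (ha : ε a = 0) (hb : ε b = 0) (hc : ε c = 0)
    (h : Good a b c)
    (he : ∀ r, ∃ p q s, r = algebraMap ℂ R (ε r) + (p * c + q * a + s * b)) (n : ℕ) :
    extDim R ε n = Module.finrank ℂ
      (((ChainComplex.of KX (Kd a b c) h.sq).linearYonedaObj ℂ (tr ε)).homology n) := by
  obtain ⟨P, hP⟩ := exists_res ε ha hb hc h he
  rw [← hP]
  exact (P.isoExt (R := ℂ) n (tr ε)).toLinearEquiv.finrank_eq

theorem mor4_eq_zero (n : ℕ) (t : ℂ) : mor4 (R := R) ε n 0 0 0 t = 0 ↔ t = 0 := by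
  constructor
  · intro h
    have h1 := mor4_apply ε n 0 0 0 t ((0, 0, 0, 1) : R × R × R × R)
    rw [h] at h1
    have h2 : (0 : ℂ) = ε 0 * 0 + (ε 0 * 0 + (ε 0 * 0 + ε 1 * t)) := h1
    simpa using h2.symm
  · rintro rfl
    refine tr_ext ε fun (x : R × R × R × R) => ?_
    refine (mor4_apply ε n 0 0 0 0 x).trans ?_
    rw [mul_zero, mul_zero, mul_zero, mul_zero, add_zero, add_zero, add_zero]
    rfl

theorem mor3_zero : mor3 (R := R) ε 0 0 0 = 0 := by
  refine tr_ext ε fun (x : R × R × R) => ?_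
  refine (mor3_apply ε 0 0 0 x).trans ?_
  rw [mul_zero, mul_zero, mul_zero, add_zero, add_zero]
  rfl

/-- first two coordinates -/
noncomputable def psi3 : (KX (R := R) 1 ⟶ tr ε) →ₗ[ℂ] ℂ × ℂ :=
  (ev ε (M := KX 1) ((1, 0, 0) : R × R × R)).prod (ev ε (M := KX 1) ((0, 1, 0) : R × R × R))

/-- first two coordinates -/
noncomputable def psi4 (n : ℕ) : (KX (R := R) (n + 2) ⟶ tr ε) →ₗ[ℂ] ℂ × ℂ :=
  (ev ε (M := KX (n + 2)) ((1, 0, 0, 0) : R × R × R × R)).prod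
    (ev ε (M := KX (n + 2)) ((0, 1, 0, 0) : R × R × R × R))

theorem psi3_mor (u v w : ℂ) : psi3 (R := R) ε (mor3 ε u v w) = (u, v) := by
  refine Prod.ext ?_ ?_
  · refine (mor3_apply ε u v w ((1, 0, 0) : R × R × R)).trans ?_
    simp
  · refine (mor3_apply ε u v w ((0, 1, 0) : R × R × R)).trans ?_
    simp

theorem psi4_mor (n : ℕ) (u v w t : ℂ) : psi4 (R := R) ε n (mor4 ε n u v w t) = (u, v) := by
  refine Prod.ext ?_ ?_
  · refine (mor4_apply ε n u v w t ((1, 0, 0, 0) : R × R × R × R)).trans ?_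
    simp
  · refine (mor4_apply ε n u v w t ((0, 1, 0, 0) : R × R × R × R)).trans ?_
    simp

theorem extDim_zero (ha : ε a = 0) (hb : ε b = 0) (hc : ε c = 0)
    (h : Good a b c)
    (he : ∀ r, ∃ p q s, r = algebraMap ℂ R (ε r) + (p * c + q * a + s * b)) :
    extDim R ε 0 = 1 := by
  rw [extDim_eq ε ha hb hc h he, ext_zero KX (Kd a b c) h.sq (tr ε)
    (ev ε (M := KX 0) (1 : R)), Module.finrank_self]
  · intro w
    refine ⟨w • aug ε, d1_comp ε ha hb hc _, ?_⟩
    rw [map_smul]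
    change w * (aug ε (1 : R) : ℂ) = w
    rw [aug_apply, map_one, mul_one]
  · intro x _ hx
    obtain ⟨z, rfl⟩ := eq_aug ε x
    rw [map_smul] at hx
    change z * (aug ε (1 : R) : ℂ) = 0 at hx
    rw [aug_apply, map_one, mul_one] at hx
    rw [hx, zero_smul]

theorem extDim_succ (ha : ε a = 0) (hb : ε b = 0) (hc : ε c = 0)
    (h : Good a b c)
    (he : ∀ r, ∃ p q s, r = algebraMap ℂ R (ε r) + (p * c + q * a + s * b)) (n : ℕ) :
    extDim R ε (n + 1) = 2 := by
  have h2 : Module.finrank ℂ (ℂ × ℂ) = 2 := by simp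
  rw [extDim_eq ε ha hb hc h he, ← h2]
  match n with
  | 0 =>
    refine ext_succ KX (Kd a b c) h.sq (tr ε) 0 (psi3 ε) ?_ ?_
    · intro w
      refine ⟨mor3 ε w.1 w.2 0, ?_, psi3_mor ε _ _ _⟩
      refine (d2_comp ε ha hb hc _ _ _).trans ((mor4_eq_zero ε _ _).2 neg_zero)
    · intro x hx
      obtain ⟨u, v, w, rfl⟩ := eq_mor3 ε x
      have hw := (mor4_eq_zero ε _ _).1 ((d2_comp ε ha hb hc _ _ _).symm.trans hx)
      rw [neg_eq_zero] at hw
      subst hw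
      rw [psi3_mor]
      constructor
      · intro e
        obtain ⟨rfl, rfl⟩ := Prod.ext_iff.1 e
        exact ⟨0, Limits.comp_zero.trans (mor3_zero ε).symm⟩
      · rintro ⟨y, hy⟩
        rw [d1_comp ε ha hb hc] at hy
        rw [← psi3_mor (R := R) ε u v 0, ← hy, map_zero]
  | 1 =>
    refine ext_succ KX (Kd a b c) h.sq (tr ε) 1 (psi4 ε 0) ?_ ?_
    · intro w
      refine ⟨mor4 ε 0 w.1 w.2 0 0, ?_, psi4_mor ε _ _ _ _ _⟩
      refine (d3_comp ε ha hb hc _ _ _ _ _).trans ((mor4_eq_zero ε _ _).2 neg_zero)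
    · intro x hx
      obtain ⟨u, v, w, t, rfl⟩ := eq_mor4 ε 0 x
      have hw := (mor4_eq_zero ε _ _).1 ((d3_comp ε ha hb hc _ _ _ _ _).symm.trans hx)
      rw [neg_eq_zero] at hw
      subst hw
      rw [psi4_mor]
      constructor
      · intro e
        obtain ⟨rfl, rfl⟩ := Prod.ext_iff.1 e
        refine ⟨mor3 ε 0 0 (-t), ?_⟩
        rw [d2_comp ε ha hb hc, neg_neg]
        rfl
      · rintro ⟨y, hy⟩
        obtain ⟨u', v', w', rfl⟩ := eq_mor3 ε y
        rw [← psi4_mor (R := R) ε 0 u v 0 t, ← hy, d2_comp ε ha hb hc, psi4_mor]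
        rfl
  | n + 2 =>
    refine ext_succ KX (Kd a b c) h.sq (tr ε) (n + 2) (psi4 ε (n + 1)) ?_ ?_
    · intro w
      refine ⟨mor4 ε (n + 1) w.1 w.2 0 0, ?_, psi4_mor ε _ _ _ _ _⟩
      refine (d3_comp ε ha hb hc _ _ _ _ _).trans ((mor4_eq_zero ε _ _).2 neg_zero)
    · intro x hx
      obtain ⟨u, v, w, t, rfl⟩ := eq_mor4 ε (n + 1) x
      have hw := (mor4_eq_zero ε _ _).1 ((d3_comp ε ha hb hc _ _ _ _ _).symm.trans hx)
      rw [neg_eq_zero] at hw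
      subst hw
      rw [psi4_mor]
      constructor
      · intro e
        obtain ⟨rfl, rfl⟩ := Prod.ext_iff.1 e
        refine ⟨mor4 ε n 0 0 (-t) 0, ?_⟩
        rw [d3_comp ε ha hb hc, neg_neg]
        rfl
      · rintro ⟨y, hy⟩
        obtain ⟨u', v', w', t', rfl⟩ := eq_mor4 ε n y
        rw [← psi4_mor (R := R) ε (n + 1) u v 0 t, ← hy, d3_comp ε ha hb hc, psi4_mor]
        rfl

end aug

end Hom

end Betti

theorem betti_numbers (ε : RingQuot CRel →ₐ[ℂ] ℂ)
    (hε : ∀ i : Fin 3, ε (RingQuot.mkAlgHom ℂ CRel (ι ℂ i)) = 0) :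
    (extDim (RingQuot CRel) ε 0 = 1 ∧ ∀ n ≥ 1, extDim (RingQuot CRel) ε n = 2) ∧
    (PowerSeries.mk fun n => (extDim (RingQuot CRel) ε n : ℚ)) * (1 - PowerSeries.X) =
      1 + PowerSeries.X := by
  have hg : Betti.Good (Betti.gen 0) (Betti.gen 1) (Betti.gen 2) :=
    ⟨Betti.rel12, Betti.rel13, Betti.rel23, Betti.rel33, Betti.exact_c, Betti.exact_b,
      Betti.exact_ab⟩
  have he := Betti.exact_eps ε hε
  have h0 : extDim (RingQuot CRel) ε 0 = 1 :=
    Betti.extDim_zero ε (hε 0) (hε 1) (hε 2) hg he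
  have h1 : ∀ n, extDim (RingQuot CRel) ε (n + 1) = 2 :=
    Betti.extDim_succ ε (hε 0) (hε 1) (hε 2) hg he
  refine ⟨⟨h0, fun n hn => ?_⟩, ?_⟩
  · obtain ⟨m, rfl⟩ := Nat.exists_eq_add_of_le' hn
    exact h1 m
  · ext n
    rw [mul_sub, mul_one, map_sub, map_add]
    match n with
    | 0 => simp [h0, PowerSeries.coeff_one]
    | 1 =>
      rw [PowerSeries.coeff_succ_mul_X]
      simp [h0, h1 0, PowerSeries.coeff_one]
      norm_num
    | n + 2 =>
      rw [PowerSeries.coeff_succ_mul_X]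
      simp [h1, PowerSeries.coeff_one, PowerSeries.coeff_X]
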